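/- The subtree density of the comb satisfies D(C_n) → 3/4 as n → ∞. -/

import Mathlib

/-- A subtree of a graph: a nonempty set of vertices inducing a connected subgraph. -/
def IsSubtree {V : Type*} (G : SimpleGraph V) (S : Finset V) : Prop :=
  S.Nonempty ∧ (G.induce (S : Set V)).Connected

/-- `N(T)`: the number of subtrees. -/
noncomputable def numSubtrees {V : Type*} [Fintype V] (G : SimpleGraph V) : ℕ :=
  Nat.card {S : Finset V // IsSubtree G S}

/-- `R(T) = Σ_S |S|`: the total number of vertices over all subtrees. -/
noncomputable def totalSubtreeOrder {V : Type*} [Fintype V] (G : SimpleGraph V) : ℕ :=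
  ∑ S ∈ (Set.toFinite {S : Finset V | IsSubtree G S}).toFinset, S.card

/-- `μ(T)`: the average subtree order. -/
noncomputable def avgSubtreeOrder {V : Type*} [Fintype V] (G : SimpleGraph V) : ℝ :=
  (totalSubtreeOrder G : ℝ) / (numSubtrees G : ℝ)

/-- `D(T) = μ(T)/|T|`: the subtree density. -/
noncomputable def subtreeDensity {V : Type*} [Fintype V] (G : SimpleGraph V) : ℝ :=
  avgSubtreeOrder G / (Fintype.card V : ℝ)

/-- The comb `C_n`: a path with `n` vertices (the `Sum.inl` vertices), with one pendant
leaf (the corresponding `Sum.inr` vertex) attached to each path vertex. -/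
def comb (n : ℕ) : SimpleGraph (Fin n ⊕ Fin n) :=
  SimpleGraph.fromRel fun a b => match a, b with
    | Sum.inl i, Sum.inl j => (i : ℕ) + 1 = (j : ℕ)
    | Sum.inl i, Sum.inr j => i = j
    | _, _ => False

open Finset

section ForMathlib

/-- A predicate preserved by adjacency inside `S` is constant on `S` if `S` induces a preconnected
subgraph. -/
theorem SimpleGraph.Preconnected.forall_mem_of_adj {V : Type*} {G : SimpleGraph V} {S : Set V}
    (h : (G.induce S).Preconnected) (P : V → Prop)
    (hP : ∀ u ∈ S, ∀ v ∈ S, G.Adj u v → P u → P v) {x y : V} (hx : x ∈ S) (hy : y ∈ S)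
    (hPx : P x) : P y := by
  obtain ⟨w⟩ := h ⟨x, hx⟩ ⟨y, hy⟩
  have key : ∀ {u v : S}, (G.induce S).Walk u v → P u → P v := by
    intro u v w
    induction w with
    | nil => exact id
    | cons hadj _ ih => exact fun hu => ih (hP _ (Subtype.prop _) _ (Subtype.prop _) hadj hu)
  exact key w hPx

/-- Twice the total size of all subsets of `s`. -/
theorem Finset.two_mul_sum_card_powerset {α : Type*} [DecidableEq α] (s : Finset α) :
    2 * ∑ t ∈ s.powerset, #t = #s * 2 ^ #s := by
  induction s using Finset.induction_on with
  | empty => simp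
  | insert a s ha ih =>
    rw [sum_powerset_insert ha, card_insert_of_notMem ha]
    have : ∑ t ∈ s.powerset, #(insert a t) = ∑ t ∈ s.powerset, (#t + 1) :=
      sum_congr rfl fun t ht => card_insert_of_notMem fun h => ha (mem_powerset.1 ht h)
    rw [this, sum_add_distrib, mul_add, mul_add, ih]
    simp
    ring

end ForMathlib

section Comb

variable {n : ℕ}

theorem comb_adj_inl_inl {i j : Fin n} :
    (comb n).Adj (.inl i) (.inl j) ↔ (i : ℕ) + 1 = j ∨ (j : ℕ) + 1 = i := by
  simp only [comb, SimpleGraph.fromRel_adj, ne_eq, Sum.inl.injEq, and_iff_right_iff_imp]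
  rintro h rfl
  omega

theorem comb_adj_inl_inr {i j : Fin n} : (comb n).Adj (.inl i) (.inr j) ↔ i = j := by
  simp [comb]

theorem comb_adj_inr_inl {i j : Fin n} : (comb n).Adj (.inr i) (.inl j) ↔ i = j := by
  rw [SimpleGraph.adj_comm, comb_adj_inl_inr, eq_comm]

theorem not_comb_adj_inr_inr {i j : Fin n} : ¬ (comb n).Adj (.inr i) (.inr j) := by
  simp [comb]

theorem isSubtree_singleton {V : Type*} (G : SimpleGraph V) (v : V) : IsSubtree G {v} := by
  refine ⟨singleton_nonempty v, ?_⟩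
  rw [coe_singleton]
  exact { preconnected := .of_subsingleton, nonempty := ⟨⟨v, rfl⟩⟩ }

theorem isSubtree_comb_disjSum {a b : Fin n} (hab : a ≤ b) {L : Finset (Fin n)}
    (hL : L ⊆ Icc a b) : IsSubtree (comb n) ((Icc a b).disjSum L) := by
  have ha : (Sum.inl a : Fin n ⊕ Fin n) ∈ (Icc a b).disjSum L := by simp [hab]
  refine ⟨⟨_, ha⟩, ?_⟩
  rw [SimpleGraph.connected_iff_exists_forall_reachable]
  refine ⟨⟨_, ha⟩, ?_⟩
  have spine : ∀ k : ℕ, ∀ i : Fin n, (i : ℕ) = a + k →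
      ∀ hi : (Sum.inl i : Fin n ⊕ Fin n) ∈ (Icc a b).disjSum L,
      ((comb n).induce (((Icc a b).disjSum L : Finset _) : Set (Fin n ⊕ Fin n))).Reachable
        ⟨_, ha⟩ ⟨_, hi⟩ := by
    intro k
    induction k with
    | zero =>
      intro i hi _
      obtain rfl : i = a := Fin.ext hi
      exact .rfl
    | succ k ih =>
      intro i hi him
      have hib : i ≤ b := (show a ≤ i ∧ i ≤ b by simpa using him).2
      let j : Fin n := ⟨a + k, by omega⟩
      have hj : (Sum.inl j : Fin n ⊕ Fin n) ∈ (Icc a b).disjSum L := by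
        simp only [inl_mem_disjSum, mem_Icc, Fin.le_def, j] at hib ⊢
        omega
      refine (ih j rfl hj).trans (SimpleGraph.Adj.reachable ?_)
      simp only [SimpleGraph.induce_adj, comb_adj_inl_inl, j]
      omega
  have spine' : ∀ i (hi : (Sum.inl i : Fin n ⊕ Fin n) ∈ (Icc a b).disjSum L),
      ((comb n).induce (((Icc a b).disjSum L : Finset _) : Set (Fin n ⊕ Fin n))).Reachable
        ⟨_, ha⟩ ⟨_, hi⟩ := by
    intro i hi
    have : a ≤ i := (show a ≤ i ∧ i ≤ b by simpa using hi).1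
    exact spine (i - a) i (by rw [Fin.le_def] at this; omega) hi
  rintro ⟨i | i, hi⟩
  · exact spine' i hi
  · have hi' : (Sum.inl i : Fin n ⊕ Fin n) ∈ (Icc a b).disjSum L := by
      have : i ∈ L := by simpa using hi
      exact inl_mem_disjSum.2 (hL this)
    refine (spine' i hi').trans (SimpleGraph.Adj.reachable ?_)
    simp [comb_adj_inl_inr]

/-- A subtree of the comb containing a leaf but not its neighbour is that leaf. -/
theorem IsSubtree.eq_singleton_inr {S : Finset (Fin n ⊕ Fin n)} (hS : IsSubtree (comb n) S)
    {j : Fin n} (hr : .inr j ∈ S) (hl : .inl j ∉ S) : S = {.inr j} := by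
  refine eq_singleton_iff_unique_mem.2 ⟨hr, fun y hy => ?_⟩
  refine hS.2.preconnected.forall_mem_of_adj (· = .inr j) ?_ (mem_coe.2 hr) (mem_coe.2 hy) rfl
  rintro u - (i | i) hv hadj rfl
  · rw [comb_adj_inr_inl] at hadj
    exact absurd (hadj ▸ hv) hl
  · exact absurd hadj not_comb_adj_inr_inr

/-- The path vertices of a subtree of the comb form an order-connected set. -/
theorem IsSubtree.inl_mem {S : Finset (Fin n ⊕ Fin n)} (hS : IsSubtree (comb n) S)
    {a b c : Fin n} (ha : .inl a ∈ S) (hb : .inl b ∈ S) (hac : a ≤ c) (hcb : c ≤ b) :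
    .inl c ∈ S := by
  by_contra hc
  have hne : a ≠ c := fun h => hc (h ▸ ha)
  have := hS.2.preconnected.forall_mem_of_adj (fun v => Sum.elim id id v < c) ?_
    (mem_coe.2 ha) (mem_coe.2 hb) (lt_of_le_of_ne hac hne)
  · exact absurd hcb (not_le.2 this)
  rintro (i | i) - (j | j) hv hadj hu
  · have hjc : j ≠ c := fun h => hc (h ▸ hv)
    rw [comb_adj_inl_inl] at hadj
    simp only [Sum.elim_inl, id, Fin.lt_def, ne_eq, Fin.ext_iff] at hu hjc ⊢
    omega
  · rw [comb_adj_inl_inr] at hadj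
    simpa [hadj] using hu
  · rw [comb_adj_inr_inl] at hadj
    simpa [hadj] using hu
  · exact absurd hadj not_comb_adj_inr_inr

/-- The subtrees of the comb are the single leaves, and the intervals of the path together with
some of the leaves attached to them. -/
theorem isSubtree_comb_iff {S : Finset (Fin n ⊕ Fin n)} :
    IsSubtree (comb n) S ↔ (∃ j, S = {.inr j}) ∨
      ∃ a b : Fin n, a ≤ b ∧ ∃ L ⊆ Icc a b, S = (Icc a b).disjSum L := by
  constructor
  · intro hS
    by_cases h : ∃ j, .inr j ∈ S ∧ .inl j ∉ S
    · obtain ⟨j, hr, hl⟩ := h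
      exact .inl ⟨j, hS.eq_singleton_inr hr hl⟩
    · push Not at h
      have hne : S.toLeft.Nonempty := by
        obtain ⟨i | i, hi⟩ := hS.1
        · exact ⟨i, mem_toLeft.2 hi⟩
        · exact ⟨i, mem_toLeft.2 (h i hi)⟩
      have hIcc : S.toLeft = Icc (S.toLeft.min' hne) (S.toLeft.max' hne) := by
        ext c
        refine ⟨fun hc => mem_Icc.2 ⟨min'_le _ _ hc, le_max' _ _ hc⟩, fun hc => ?_⟩
        rw [mem_Icc] at hc
        exact mem_toLeft.2 (hS.inl_mem (mem_toLeft.1 (min'_mem _ hne))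
          (mem_toLeft.1 (max'_mem _ hne)) hc.1 hc.2)
      refine .inr ⟨_, _, min'_le_max' _ hne, S.toRight, ?_, ?_⟩
      · rw [← hIcc]
        exact fun j hj => mem_toLeft.2 (h j (mem_toRight.1 hj))
      · rw [← hIcc, toLeft_disjSum_toRight]
  · rintro (⟨j, rfl⟩ | ⟨a, b, hab, L, hL, rfl⟩)
    · exact isSubtree_singleton _ _
    · exact isSubtree_comb_disjSum hab hL

theorem sum_subtrees_comb (f : ℕ → ℕ) :
    ∑ S ∈ (Set.toFinite {S | IsSubtree (comb n) S}).toFinset, f #S =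
      n * f 1 + ∑ b : Fin n, ∑ a ∈ Iic b, ∑ L ∈ (Icc a b).powerset, f (#(Icc a b) + #L) := by
  classical
  let I : Finset ((_ : Fin n) × (_ : Fin n) × Finset (Fin n)) :=
    univ.sigma fun b => (Iic b).sigma fun a => (Icc a b).powerset
  let F : (_ : Fin n) × (_ : Fin n) × Finset (Fin n) → Finset (Fin n ⊕ Fin n) :=
    fun x => (Icc x.2.1 x.1).disjSum x.2.2
  have hI : ∀ x, x ∈ I ↔ x.2.1 ≤ x.1 ∧ x.2.2 ⊆ Icc x.2.1 x.1 := by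
    simp [I]
  have hF : Set.InjOn F I := by
    rintro ⟨b, a, L⟩ hx ⟨b', a', L'⟩ hx' h
    rw [mem_coe, hI] at hx hx'
    dsimp only at hx hx'
    have hl := congrArg toLeft h
    have hr := congrArg toRight h
    simp only [F, toLeft_disjSum, toRight_disjSum] at hl hr
    have hab : a ∈ Icc a' b' ∧ b ∈ Icc a' b' := by simp [← hl, hx.1]
    have hab' : a' ∈ Icc a b ∧ b' ∈ Icc a b := by simp [hl, hx'.1]
    simp only [mem_Icc] at hab hab'
    obtain rfl : a = a' := le_antisymm hab'.1.1 hab.1.1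
    obtain rfl : b = b' := le_antisymm hab.2.2 hab'.2.2
    rw [hr]
  have hset : (Set.toFinite {S | IsSubtree (comb n) S}).toFinset =
      univ.image (fun j : Fin n => ({.inr j} : Finset (Fin n ⊕ Fin n))) ∪ I.image F := by
    ext S
    simp only [Set.Finite.mem_toFinset, Set.mem_ofPred_eq, isSubtree_comb_iff, mem_union,
      mem_image, mem_univ, true_and, hI, F]
    refine or_congr ⟨fun ⟨j, h⟩ => ⟨j, h.symm⟩, fun ⟨j, h⟩ => ⟨j, h.symm⟩⟩ ⟨?_, ?_⟩
    · rintro ⟨a, b, hab, L, hL, rfl⟩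
      exact ⟨⟨b, a, L⟩, ⟨hab, hL⟩, rfl⟩
    · rintro ⟨⟨b, a, L⟩, ⟨hab, hL⟩, rfl⟩
      exact ⟨a, b, hab, L, hL, rfl⟩
  have hdisj : Disjoint (univ.image (fun j : Fin n => ({.inr j} : Finset (Fin n ⊕ Fin n))))
      (I.image F) := by
    rw [disjoint_left]
    simp only [mem_image, mem_univ, true_and, hI, F]
    rintro _ ⟨j, rfl⟩ ⟨⟨b, a, L⟩, ⟨hab, -⟩, h⟩
    have : (Sum.inl a : Fin n ⊕ Fin n) ∈ (Icc a b).disjSum L := by simpa using hab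
    rw [h] at this
    simp at this
  rw [hset, sum_union hdisj, sum_image hF, sum_image (fun i _ j _ h => by simpa using h)]
  simp [I, F, sum_sigma]

theorem sum_Iic_card_Icc (g : ℕ → ℕ) (b : Fin n) :
    ∑ a ∈ Iic b, g #(Icc a b) = ∑ k ∈ range (b + 1), g (k + 1) := by
  rw [← sum_range_reflect, Nat.range_succ_eq_Iic, ← Fin.map_valEmbedding_Iic, sum_map]
  refine sum_congr rfl fun a ha => ?_
  have : (a : ℕ) ≤ b := by simpa using ha
  rw [Fin.card_Icc, Fin.valEmbedding_apply]
  congr 1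
  omega

theorem numSubtrees_comb (n : ℕ) : numSubtrees (comb n) + (n + 4) = 4 * 2 ^ n := by
  have h : numSubtrees (comb n) = n + ∑ b ∈ range n, ∑ k ∈ range (b + 1), 2 ^ (k + 1) := by
    have := sum_subtrees_comb (n := n) fun _ => 1
    simp only [sum_const, card_powerset, smul_eq_mul, mul_one,
      sum_Iic_card_Icc (fun k => 2 ^ k)] at this
    rw [Fin.sum_univ_eq_sum_range (fun b => ∑ k ∈ range (b + 1), 2 ^ (k + 1))] at this
    rw [← this, numSubtrees]
    exact Nat.card_eq_card_finite_toFinset _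
  have inner (m : ℕ) : ∑ k ∈ range m, 2 ^ (k + 1) + 2 = 2 * 2 ^ m := by
    induction m with
    | zero => simp
    | succ m ih => rw [sum_range_succ, pow_succ]; omega
  rw [h]
  clear h
  induction n with
  | zero => simp
  | succ n ih =>
    rw [sum_range_succ]
    have := inner (n + 1)
    rw [pow_succ] at this ⊢
    omega

theorem totalSubtreeOrder_comb (n : ℕ) :
    totalSubtreeOrder (comb n) + 12 * 2 ^ n = 4 * n + 12 + 6 * (n * 2 ^ n) := by
  have h : 2 * totalSubtreeOrder (comb n) =
      2 * n + ∑ b ∈ range n, ∑ k ∈ range (b + 1), 3 * ((k + 1) * 2 ^ (k + 1)) := by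
    have hL (s : Finset (Fin n)) : 2 * ∑ L ∈ s.powerset, (#s + #L) = 3 * (#s * 2 ^ #s) := by
      rw [sum_add_distrib, mul_add, two_mul_sum_card_powerset]
      simp
      ring
    rw [totalSubtreeOrder, sum_subtrees_comb fun k => k, mul_add, mul_sum]
    simp only [mul_sum (Iic _), hL, sum_Iic_card_Icc (fun k => 3 * (k * 2 ^ k)), mul_one]
    rw [Fin.sum_univ_eq_sum_range
      (fun b => ∑ k ∈ range (b + 1), 3 * ((k + 1) * 2 ^ (k + 1)))]
  have inner (m : ℕ) : ∑ k ∈ range m, 3 * ((k + 1) * 2 ^ (k + 1)) + 6 * 2 ^ m =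
      6 * (m * 2 ^ m) + 6 := by
    induction m with
    | zero => simp
    | succ m ih =>
      rw [sum_range_succ]
      ring_nf at ih ⊢
      omega
  have outer (m : ℕ) : ∑ b ∈ range m, ∑ k ∈ range (b + 1), 3 * ((k + 1) * 2 ^ (k + 1)) +
      24 * 2 ^ m = 6 * m + 24 + 12 * (m * 2 ^ m) := by
    induction m with
    | zero => simp
    | succ m ih =>
      rw [sum_range_succ]
      have := inner (m + 1)
      ring_nf at ih this ⊢
      omega
  have := outer n
  omega

theorem subtreeDensity_comb (n : ℕ) :
    subtreeDensity (comb n) =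
      (4 * n + 12 + 6 * (n * 2 ^ n) - 12 * 2 ^ n) / (4 * 2 ^ n - (n + 4)) / (2 * n) := by
  have hR : (totalSubtreeOrder (comb n) : ℝ) = 4 * n + 12 + 6 * (n * 2 ^ n) - 12 * 2 ^ n :=
    eq_sub_of_add_eq (mod_cast totalSubtreeOrder_comb n)
  have hN : (numSubtrees (comb n) : ℝ) = 4 * 2 ^ n - (n + 4) :=
    eq_sub_of_add_eq (mod_cast numSubtrees_comb n)
  rw [subtreeDensity, avgSubtreeOrder, hR, hN]
  simp [two_mul]

end Comb

theorem stmt18 :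
    Filter.Tendsto (fun n : ℕ => subtreeDensity (comb n)) Filter.atTop
      (nhds (3 / 4 : ℝ)) := by
  have hinv : Filter.Tendsto (fun n : ℕ => (n : ℝ)⁻¹) Filter.atTop (nhds 0) :=
    tendsto_inv_atTop_nhds_zero_nat
  have hgeom : Filter.Tendsto (fun n : ℕ => (2⁻¹ : ℝ) ^ n) Filter.atTop (nhds 0) :=
    tendsto_pow_atTop_nhds_zero_of_lt_one (by norm_num) (by norm_num)
  have hngeom : Filter.Tendsto (fun n : ℕ => (n : ℝ) * (2⁻¹ : ℝ) ^ n) Filter.atTop (nhds 0) :=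
    tendsto_self_mul_const_pow_of_lt_one (by norm_num) (by norm_num)
  have hlim : Filter.Tendsto (fun n : ℕ =>
      (4 * (2⁻¹ : ℝ) ^ n + 12 * ((n : ℝ)⁻¹ * 2⁻¹ ^ n) + 6 - 12 * (n : ℝ)⁻¹) /
        (2 * (4 - (n * 2⁻¹ ^ n + 4 * 2⁻¹ ^ n)))) Filter.atTop
      (nhds ((4 * 0 + 12 * (0 * 0) + 6 - 12 * 0) / (2 * (4 - (0 + 4 * 0))))) :=
    ((((hgeom.const_mul 4).add ((hinv.mul hgeom).const_mul 12)).add_const 6).sub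
      (hinv.const_mul 12)).div
      (((hngeom.add (hgeom.const_mul 4)).const_sub 4).const_mul 2) (by norm_num)
  rw [show (3 / 4 : ℝ) = (4 * 0 + 12 * (0 * 0) + 6 - 12 * 0) / (2 * (4 - (0 + 4 * 0))) by
    norm_num]
  refine hlim.congr' ?_
  filter_upwards [Filter.eventually_gt_atTop 0] with n hn
  have hn' : (n : ℝ) ≠ 0 := by positivity
  have h2 : (2 : ℝ) ^ n ≠ 0 := by positivity
  rw [subtreeDensity_comb, div_div, inv_pow,
    ← mul_div_mul_right _ _ (mul_ne_zero hn' h2)]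
  congr 1 <;> field_simp
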